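/- Let S, T be sets with co-filters 𝓕 on S and 𝓖 on T. Let (A_s)_{s∈S} and (B_t)_{t∈T} be families of abelian groups, and let φ be a family of group homomorphisms φ_{s,t} : A_s → B_t whose support {(s,t) ∈ S × T : φ_{s,t} ≠ 0} belongs to hom(𝓕,𝓖). Let a = (a_s) ∈ ∏_s A_s with support {s : a_s ≠ 0} ∈ 𝓕. Then: (i) for every t ∈ T, the set {s ∈ S : φ_{s,t}(a_s) ≠ 0} is finite, so b_t := Σ_{s} φ_{s,t}(a_s) is a well-defined element of B_t; (ii) the support {t ∈ T : b_t ≠ 0} of the resulting family b belongs to 𝓖. Hence φ maps the restricted product ∏^𝓕 A_s into the restricted product ∏^𝓖 B_t. -/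

import Mathlib

/-- A co-filter on a set `S`: a collection of subsets closed under passing to subsets
and under binary unions. -/
def IsCofilter {S : Type*} (F : Set (Set S)) : Prop :=
  (∀ A ∈ F, ∀ B : Set S, B ⊆ A → B ∈ F) ∧ ∀ A ∈ F, ∀ B ∈ F, A ∪ B ∈ F

/-- The co-filter `hom(𝓕, 𝓖)` on `S × T`: subsets `U` such that `U ∩ (R × {t})` is finite
for all `t ∈ T`, `R ∈ 𝓕`, and such that `H_R(U) = {t | U ∩ (R × {t}) ≠ ∅} ∈ 𝓖` for `R ∈ 𝓕`. -/
def cofilterHom {S T : Type*} (F : Set (Set S)) (G : Set (Set T)) :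
    Set (Set (S × T)) :=
  {U | (∀ t : T, ∀ R ∈ F, (U ∩ R ×ˢ ({t} : Set T)).Finite) ∧
       ∀ R ∈ F, {t : T | (U ∩ R ×ˢ ({t} : Set T)).Nonempty} ∈ G}

theorem IsCofilter.isLowerSet {T : Type*} {G : Set (Set T)} (hG : IsCofilter G) :
    IsLowerSet G :=
  fun A B hBA hA => hG.1 A hA B hBA

theorem inter_prod_singleton_eq_image {S T : Type*} (U : Set (S × T)) (R : Set S) (t : T) :
    U ∩ R ×ˢ {t} = (fun s => (s, t)) '' {s ∈ R | (s, t) ∈ U} := by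
  rw [Set.prod_singleton, Set.inter_comm, ← Set.image_inter_preimage]
  rfl

theorem finite_inter_prod_singleton_iff {S T : Type*} {U : Set (S × T)} {R : Set S} {t : T} :
    (U ∩ R ×ˢ {t}).Finite ↔ {s ∈ R | (s, t) ∈ U}.Finite := by
  rw [inter_prod_singleton_eq_image,
    Set.finite_image_iff (Prod.mk_left_injective t).injOn]

theorem inter_prod_singleton_nonempty_iff {S T : Type*} {U : Set (S × T)} {R : Set S} {t : T} :
    (U ∩ R ×ˢ {t}).Nonempty ↔ ∃ s ∈ R, (s, t) ∈ U := by
  rw [inter_prod_singleton_eq_image, Set.image_nonempty]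
  rfl

theorem mem_cofilterHom_iff {S T : Type*} {F : Set (Set S)} {G : Set (Set T)}
    {U : Set (S × T)} :
    U ∈ cofilterHom F G ↔
      (∀ t, ∀ R ∈ F, {s ∈ R | (s, t) ∈ U}.Finite) ∧
        ∀ R ∈ F, {t | ∃ s ∈ R, (s, t) ∈ U} ∈ G := by
  simp only [cofilterHom, Set.mem_ofPred_eq, finite_inter_prod_singleton_iff,
    inter_prod_singleton_nonempty_iff]

theorem ne_zero_and_ne_zero_of_addMonoidHom_apply_ne_zero {M N : Type*} [AddZeroClass M]
    [AddZeroClass N] {f : M →+ N} {x : M} (h : f x ≠ 0) : x ≠ 0 ∧ f ≠ 0 :=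
  ⟨ne_zero_of_map h, DFunLike.ne_iff.2 ⟨x, h⟩⟩

theorem exists_ne_zero_of_finsum_ne_zero {ι M : Type*} [AddCommMonoid M] {f : ι → M}
    (h : ∑ᶠ i, f i ≠ 0) : ∃ i, f i ≠ 0 := by
  by_contra! hf
  exact h (finsum_eq_zero_of_forall_eq_zero hf)

theorem cofilterHom_apply_restrictedProduct_general {S T : Type*}
    {F : Set (Set S)} {G : Set (Set T)} (hG : IsLowerSet G)
    {A : S → Type*} [∀ s, AddZeroClass (A s)]
    {B : T → Type*} [∀ t, AddCommMonoid (B t)]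
    {φ : ∀ s t, A s →+ B t}
    (hφ : {st : S × T | φ st.1 st.2 ≠ 0} ∈ cofilterHom F G)
    {a : ∀ s, A s} (ha : {s : S | a s ≠ 0} ∈ F) :
    (∀ t : T, {s : S | φ s t (a s) ≠ 0}.Finite) ∧
    {t : T | (∑ᶠ s : S, φ s t (a s)) ≠ 0} ∈ G := by
  obtain ⟨finite_fiber, fiber_nonempty_mem⟩ := mem_cofilterHom_iff.1 hφ
  have mem_supports {s : S} {t : T} (h : φ s t (a s) ≠ 0) : a s ≠ 0 ∧ φ s t ≠ 0 :=
    ne_zero_and_ne_zero_of_addMonoidHom_apply_ne_zero h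
  constructor
  · exact fun t => (finite_fiber t _ ha).subset fun s hs => mem_supports hs
  · refine hG (fun t ht => ?_) (fiber_nonempty_mem _ ha)
    obtain ⟨s, hs⟩ := exists_ne_zero_of_finsum_ne_zero ht
    exact ⟨s, mem_supports hs⟩

/-- A family of homomorphisms supported on a set in `hom(𝓕, 𝓖)` maps the restricted
product `∏^𝓕 A_s` into the restricted product `∏^𝓖 B_t`: the sums defining the image
are finite, and the support of the image lies in `𝓖`. -/
theorem cofilterHom_apply_restrictedProduct {S T : Type*}
    (F : Set (Set S)) (G : Set (Set T)) (hF : IsCofilter F) (hG : IsCofilter G)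
    (A : S → Type*) [∀ s, AddCommGroup (A s)]
    (B : T → Type*) [∀ t, AddCommGroup (B t)]
    (φ : ∀ s t, A s →+ B t)
    (hφ : {st : S × T | φ st.1 st.2 ≠ 0} ∈ cofilterHom F G)
    (a : ∀ s, A s) (ha : {s : S | a s ≠ 0} ∈ F) :
    (∀ t : T, ({s : S | φ s t (a s) ≠ 0}).Finite) ∧
    {t : T | (∑ᶠ s : S, φ s t (a s)) ≠ 0} ∈ G :=
  cofilterHom_apply_restrictedProduct_general hG.isLowerSet hφ ha
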